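/- arXiv:math/0108082 — 2 statements merged into one kernel-verified Lean document; each statement's English description precedes it below -/
import Mathlib

section
/- Let A be a finite abelian group and μ a stationary Markov measure on A^ℤ with strictly positive transition matrix. If ν is a probability measure absolutely continuous with respect to μ, then ν is harmonically mixing. -/
open MeasureTheory

/-- Evaluation at `x` of the character of `A^ℤ` with coefficient system `χ`. -/
noncomputable def charEval {A : Type*} [AddCommGroup A] (χ : ℤ → AddChar A ℂ)
    (x : ℤ → A) : ℂ :=
  ∏ᶠ i, χ i (x i)

/-- Harmonic mixing of a measure on `A^ℤ`. -/
def HarmonicallyMixing {A : Type*} [AddCommGroup A] [MeasurableSpace A]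
    (μ : Measure (ℤ → A)) : Prop :=
  ∀ ε > 0, ∃ R : ℕ, ∀ χ : ℤ → AddChar A ℂ, {i | χ i ≠ 1}.Finite →
    R < {i | χ i ≠ 1}.ncard → ‖∫ x, charEval χ x ∂μ‖ < ε
section TransferOperator

variable {A : Type*} [Fintype A] {Q : A → A → ℝ}

theorem norm_sum_stochastic_mul_le (hQ : ∀ a b, 0 ≤ Q a b) (hQrow : ∀ a, ∑ b, Q a b = 1)
    {z : A → ℂ} {M : ℝ} (hz : ∀ b, ‖z b‖ ≤ M) (a : A) :
    ‖∑ b, (Q a b : ℂ) * z b‖ ≤ M := by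
  calc ‖∑ b, (Q a b : ℂ) * z b‖ ≤ ∑ b, Q a b * M := by
        refine norm_sum_le_of_le _ fun b _ => ?_
        rw [norm_mul, Complex.norm_real, Real.norm_of_nonneg (hQ a b)]
        exact mul_le_mul_of_nonneg_left (hz b) (hQ a b)
    _ = M := by rw [← Finset.sum_mul, hQrow, one_mul]

theorem norm_sum_stochastic_sub_mul_le {q : ℝ} (hq : ∀ a b, q ≤ Q a b)
    (hQrow : ∀ a, ∑ b, Q a b = 1) {z : A → ℂ} {M : ℝ} (hz : ∀ b, ‖z b‖ ≤ M) (a : A) :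
    ‖∑ b, ((Q a b - q : ℝ) : ℂ) * z b‖ ≤ (1 - Fintype.card A * q) * M := by
  calc ‖∑ b, ((Q a b - q : ℝ) : ℂ) * z b‖ ≤ ∑ b, (Q a b - q) * M := by
        refine norm_sum_le_of_le _ fun b _ => ?_
        rw [norm_mul, Complex.norm_real, Real.norm_of_nonneg (sub_nonneg.2 (hq a b))]
        exact mul_le_mul_of_nonneg_left (hz b) (sub_nonneg.2 (hq a b))
    _ = _ := by
        rw [← Finset.sum_mul, Finset.sum_sub_distrib, hQrow]
        simp

/-- Two steps of a Markov chain with transition probabilities at least `q` contract the supremum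
norm as soon as the weight inserted at the first step has mean zero. -/
theorem norm_two_step_le {q : ℝ} (hq0 : 0 ≤ q) (hq : ∀ a b, q ≤ Q a b)
    (hQrow : ∀ a, ∑ b, Q a b = 1) {h : A → ℂ} (hh : ∀ b, ‖h b‖ ≤ 1) (hsum : ∑ b, h b = 0)
    {z : A → ℂ} {M : ℝ} (hz : ∀ b, ‖z b‖ ≤ M) (a : A) :
    ‖∑ b, (Q a b : ℂ) * (h b * ∑ c, (Q b c : ℂ) * z c)‖
      ≤ (1 - (Fintype.card A * q) ^ 2) * M := by
  set r : A → ℂ := fun b => ∑ c, ((Q b c - q : ℝ) : ℂ) * z c with hr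
  have hrM : ∀ b, ‖r b‖ ≤ (1 - Fintype.card A * q) * M :=
    norm_sum_stochastic_sub_mul_le hq hQrow hz
  have hsplit : ∀ b, ∑ c, (Q b c : ℂ) * z c = q * ∑ c, z c + r b := fun b => by
    rw [hr, Finset.mul_sum, ← Finset.sum_add_distrib]
    refine Finset.sum_congr rfl fun c _ => ?_
    push_cast
    ring
  have hmean : ∑ b, (Q a b : ℂ) * h b = ∑ b, ((Q a b - q : ℝ) : ℂ) * h b := by
    push_cast
    simp only [sub_mul, Finset.sum_sub_distrib, ← Finset.mul_sum, hsum, mul_zero, sub_zero]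
  have hdecomp : ∑ b, (Q a b : ℂ) * (h b * ∑ c, (Q b c : ℂ) * z c)
      = (∑ b, ((Q a b - q : ℝ) : ℂ) * h b) * (q * ∑ c, z c)
        + ∑ b, (Q a b : ℂ) * (h b * r b) := by
    rw [← hmean, Finset.sum_mul, ← Finset.sum_add_distrib]
    refine Finset.sum_congr rfl fun b _ => ?_
    rw [hsplit]
    ring
  have hfirst : ‖∑ b, ((Q a b - q : ℝ) : ℂ) * h b‖ ≤ 1 - Fintype.card A * q := by
    simpa using norm_sum_stochastic_sub_mul_le hq hQrow hh a
  have hconst : ‖(q : ℂ) * ∑ c, z c‖ ≤ Fintype.card A * q * M := by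
    rw [norm_mul, Complex.norm_real, Real.norm_of_nonneg hq0]
    have : ‖∑ c, z c‖ ≤ ∑ _c : A, M := norm_sum_le_of_le _ fun c _ => hz c
    rw [Finset.sum_const, Finset.card_univ, nsmul_eq_mul] at this
    calc q * ‖∑ c, z c‖ ≤ q * (Fintype.card A * M) := mul_le_mul_of_nonneg_left this hq0
      _ = _ := by ring
  have hsecond : ‖∑ b, (Q a b : ℂ) * (h b * r b)‖ ≤ (1 - Fintype.card A * q) * M := by
    refine norm_sum_stochastic_mul_le (fun a b => hq0.trans (hq a b)) hQrow (fun b => ?_) a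
    rw [norm_mul]
    exact (mul_le_of_le_one_left (norm_nonneg _) (hh b)).trans (hrM b)
  rw [hdecomp]
  calc _ ≤ ‖∑ b, ((Q a b - q : ℝ) : ℂ) * h b‖ * ‖(q : ℂ) * ∑ c, z c‖
        + ‖∑ b, (Q a b : ℂ) * (h b * r b)‖ := by
        rw [← norm_mul]
        exact norm_add_le _ _
    _ ≤ (1 - Fintype.card A * q) * (Fintype.card A * q * M)
        + (1 - Fintype.card A * q) * M := by
        gcongr
        exact (norm_nonneg _).trans hfirst
    _ = _ := by ring

/-- The conditional expectation of `∏ j < m, h (k + j) (x (k + j))` for a Markov chain `x` with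
transition matrix `Q`, given that the state at time `k - 1` is the last argument. -/
noncomputable def transferProd (Q : A → A → ℝ) (h : ℤ → A → ℂ) : ℤ → ℕ → A → ℂ
  | _, 0, _ => 1
  | k, m + 1, a => ∑ b, (Q a b : ℂ) * (h k b * transferProd Q h (k + 1) m b)

theorem norm_transferProd_succ_le (hQ : ∀ a b, 0 ≤ Q a b) (hQrow : ∀ a, ∑ b, Q a b = 1)
    {h : ℤ → A → ℂ} (hh : ∀ i b, ‖h i b‖ ≤ 1) {k : ℤ} {m : ℕ} {M : ℝ}
    (hM : ∀ b, ‖transferProd Q h (k + 1) m b‖ ≤ M) (a : A) :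
    ‖transferProd Q h k (m + 1) a‖ ≤ M := by
  refine norm_sum_stochastic_mul_le hQ hQrow (fun b => ?_) a
  rw [norm_mul]
  exact (mul_le_of_le_one_left (norm_nonneg _) (hh k b)).trans (hM b)

open Classical in
theorem norm_transferProd_le {q : ℝ} (hq0 : 0 ≤ q) (hq : ∀ a b, q ≤ Q a b)
    (hq1 : Fintype.card A * q ≤ 1)
    (hQrow : ∀ a, ∑ b, Q a b = 1) {h : ℤ → A → ℂ} (hh : ∀ i b, ‖h i b‖ ≤ 1)
    (k : ℤ) (m : ℕ) (a : A) :
    ‖transferProd Q h k m a‖ ≤ (1 - (Fintype.card A * q) ^ 2) ^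
      ((∑ j ∈ Finset.range m, if ∑ b, h (k + j) b = 0 then 1 else 0) / 2) := by
  have hQ : ∀ a b, 0 ≤ Q a b := fun a b => hq0.trans (hq a b)
  have hκ0 : 0 ≤ Fintype.card A * q := by positivity
  have hρ0 : 0 ≤ 1 - (Fintype.card A * q) ^ 2 := sub_nonneg.2 (pow_le_one₀ hκ0 hq1)
  have hρ1 : 1 - (Fintype.card A * q) ^ 2 ≤ 1 := by nlinarith
  have hshift : ∀ (k : ℤ) (m : ℕ),
      (∑ j ∈ Finset.range (m + 1), if ∑ b, h (k + j) b = 0 then 1 else 0)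
        = (∑ j ∈ Finset.range m, if ∑ b, h (k + 1 + j) b = 0 then 1 else 0)
          + if ∑ b, h k b = 0 then 1 else 0 := fun k m => by
    rw [Finset.sum_range_succ']
    simp only [Nat.cast_add, Nat.cast_one, Nat.cast_zero, add_zero, add_assoc, add_comm (1 : ℤ)]
  induction m using Nat.twoStepInduction generalizing k a with
  | zero => simp [transferProd]
  | one =>
    have hdiv : (∑ j ∈ Finset.range 1, if ∑ b, h (k + j) b = 0 then 1 else 0) / 2 = 0 := by
      rw [Finset.sum_range_one]
      split_ifs <;> rfl
    rw [hdiv, pow_zero]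
    exact norm_transferProd_succ_le hQ hQrow hh (by simp [transferProd]) a
  | more m ih₀ ih₁ =>
    by_cases hk : ∑ b, h k b = 0
    · set N := ∑ j ∈ Finset.range m, if ∑ b, h (k + 1 + 1 + j) b = 0 then 1 else 0 with hN
      have hle : (∑ j ∈ Finset.range (m + 2), if ∑ b, h (k + j) b = 0 then 1 else 0) / 2
          ≤ N / 2 + 1 := by
        rw [hshift, hshift, ← hN]
        split_ifs <;> omega
      refine le_trans ?_ (pow_le_pow_of_le_one hρ0 hρ1 hle)
      rw [pow_succ']
      refine norm_two_step_le hq0 hq hQrow (hh k) hk (fun b => ?_) a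
      rw [norm_mul]
      exact (mul_le_of_le_one_left (norm_nonneg _) (hh _ b)).trans (ih₀ (k + 1 + 1) b)
    · rw [hshift, if_neg hk, add_zero]
      exact norm_transferProd_succ_le hQ hQrow hh (ih₁ (k + 1)) a

end TransferOperator

theorem norm_prod_coordinates_le_one {ι A : Type*} {h : ι → A → ℂ} (hh : ∀ i b, ‖h i b‖ ≤ 1)
    {κ : Type*} (s : Finset κ) (e : κ → ι) (x : ι → A) :
    ‖∏ j ∈ s, h (e j) (x (e j))‖ ≤ 1 := by
  rw [norm_prod]
  exact Finset.prod_le_one (fun _ _ => norm_nonneg _) fun j _ => hh _ _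

section Discrete

variable {A : Type*} [Fintype A] [MeasurableSpace A]

open Classical in
/-- If the values of the coordinate `i` have outer measures adding up to `1`, all of them positive,
then the σ-algebra of the state space is discrete. -/
theorem measurableSingletonClass_of_sum_outer_measure {ι : Type*} (μ : Measure (ι → A))
    [IsProbabilityMeasure μ] (i : ι) {p : A → ℝ} (hp : ∀ a, 0 < p a) (hp1 : ∑ a, p a = 1)
    (hμ : ∀ a, μ {x | x i = a} = ENNReal.ofReal (p a)) : MeasurableSingletonClass A := by
  refine ⟨fun a => ?_⟩
  suffices h : measurableAtom a = {a} from h ▸ MeasurableSet.measurableAtom_of_countable a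
  refine Set.Subset.antisymm (fun b hb => ?_) (by simp)
  by_contra hba
  have hba : b ≠ a := hba
  set T := toMeasurable μ {x : ι → A | x i = a} with hT
  have hTm : MeasurableSet T := measurableSet_toMeasurable _ _
  have hbT : ∀ x : ι → A, x i = b → x ∈ T := fun x hx => by
    have ha : a ∈ Function.update x i ⁻¹' T :=
      subset_toMeasurable μ _ (by simp : Function.update x i a ∈ {x : ι → A | x i = a})
    have := mem_of_mem_measurableAtom hb (measurable_update x hTm) ha
    rwa [Set.mem_preimage, ← hx, Function.update_eq_self] at this
  have hcover : Set.univ ⊆ T ∪ ⋃ c ∈ (Finset.univ.erase b).erase a, {x : ι → A | x i = c} := by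
    intro x _
    by_cases hxa : x i = a
    · exact Or.inl (subset_toMeasurable μ _ hxa)
    by_cases hxb : x i = b
    · exact Or.inl (hbT x hxb)
    · exact Or.inr (Set.mem_biUnion (x := x i) (by simp [hxa, hxb]) rfl)
  have h1 : (1 : ENNReal) ≤ ENNReal.ofReal (∑ c ∈ Finset.univ.erase b, p c) := by
    calc (1 : ENNReal) = μ Set.univ := measure_univ.symm
      _ ≤ μ T + ∑ c ∈ (Finset.univ.erase b).erase a, μ {x : ι → A | x i = c} :=
        (measure_mono hcover).trans ((measure_union_le _ _).trans
          (add_le_add_right (measure_biUnion_finset_le _ _) _))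
      _ = _ := by
        rw [hT, measure_toMeasurable, hμ]
        simp only [hμ]
        rw [← ENNReal.ofReal_sum_of_nonneg fun c _ => (hp c).le,
          ← ENNReal.ofReal_add (hp a).le (Finset.sum_nonneg fun c _ => (hp c).le),
          Finset.add_sum_erase _ _ (by simp [hba.symm])]
  rw [ENNReal.one_le_ofReal] at h1
  have := Finset.add_sum_erase Finset.univ p (Finset.mem_univ b)
  linarith [hp b]

variable [MeasurableSingletonClass A]

theorem measurable_prod_coordinates {ι : Type*} (h : ι → A → ℂ) {κ : Type*} (s : Finset κ)
    (e : κ → ι) : Measurable fun x : ι → A => ∏ j ∈ s, h (e j) (x (e j)) :=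
  Finset.measurable_prod _ fun j _ =>
    (Measurable.of_discrete (f := h (e j))).comp (measurable_pi_apply (e j))

theorem measurableSet_word (k : ℤ) (n : ℕ) (f : ℕ → A) :
    MeasurableSet {x : ℤ → A | ∀ i : ℕ, i ≤ n → x (k + i) = f i} := by
  simp only [Set.ofPred_forall]
  exact MeasurableSet.iInter fun i => MeasurableSet.iInter fun _ =>
    measurableSet_eq_fun (measurable_pi_apply (k + i : ℤ)) measurable_const

theorem setIntegral_word_prod {Q : A → A → ℝ} (hQ : ∀ a b, 0 ≤ Q a b)
    {p : A → ℝ} (hp : ∀ a, 0 ≤ p a) {μ : Measure (ℤ → A)} [IsProbabilityMeasure μ]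
    (hμ : ∀ (k : ℤ) (n : ℕ) (f : ℕ → A),
      μ {x | ∀ i : ℕ, i ≤ n → x (k + i) = f i}
        = ENNReal.ofReal (p (f 0) * ∏ i ∈ Finset.range n, Q (f i) (f (i + 1))))
    {h : ℤ → A → ℂ} (hh : ∀ i b, ‖h i b‖ ≤ 1) (k : ℤ) (m n : ℕ) (f : ℕ → A) :
    ∫ x in {x : ℤ → A | ∀ i : ℕ, i ≤ n → x (k + i) = f i},
        ∏ j ∈ Finset.range m, h (k + n + 1 + j) (x (k + n + 1 + j)) ∂μ
      = (p (f 0) * ∏ i ∈ Finset.range n, Q (f i) (f (i + 1)) : ℝ)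
        * transferProd Q h (k + n + 1) m (f n) := by
  classical
  induction m generalizing n f with
  | zero =>
    have hnn : 0 ≤ p (f 0) * ∏ i ∈ Finset.range n, Q (f i) (f (i + 1)) :=
      mul_nonneg (hp _) (Finset.prod_nonneg fun i _ => hQ _ _)
    simp only [Finset.range_zero, Finset.prod_empty, setIntegral_const, transferProd,
      measureReal_def, hμ, ENNReal.toReal_ofReal hnn, mul_one, Complex.real_smul]
  | succ m ih =>
    set W : A → Set (ℤ → A) := fun b =>
      {x | ∀ i : ℕ, i ≤ n + 1 → x (k + i) = Function.update f (n + 1) b i} with hW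
    have hlast : ∀ b, ∀ x ∈ W b, x (k + n + 1) = b := fun b x hx => by
      simpa [add_assoc] using hx (n + 1) le_rfl
    have hunion : {x : ℤ → A | ∀ i : ℕ, i ≤ n → x (k + i) = f i} = ⋃ b, W b := by
      ext x
      simp only [Set.mem_iUnion]
      constructor
      · intro hx
        refine ⟨x (k + n + 1), fun i hi => ?_⟩
        rcases hi.lt_or_eq with hi | rfl
        · rw [Function.update_of_ne hi.ne]
          exact hx i (by omega)
        · simp [add_assoc]
      · rintro ⟨b, hx⟩ i hi
        rw [hx i (by omega), Function.update_of_ne (by omega)]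
    rw [hunion, integral_iUnion_fintype (fun b => measurableSet_word k (n + 1) _)
      (fun b c hbc => Set.disjoint_left.2 fun x hb hc => hbc ((hlast b x hb).symm.trans
        (hlast c x hc)))
      (fun b => (Integrable.of_bound (measurable_prod_coordinates h _ _).aestronglyMeasurable 1
        (.of_forall fun x => norm_prod_coordinates_le_one hh _ _ x)).integrableOn)]
    rw [transferProd, Finset.mul_sum]
    refine Finset.sum_congr rfl fun b _ => ?_
    have hfactor : ∫ x in W b, ∏ j ∈ Finset.range (m + 1), h (k + n + 1 + j) (x (k + n + 1 + j)) ∂μ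
        = h (k + n + 1) b * ∫ x in W b, ∏ j ∈ Finset.range m,
          h (k + (n + 1 : ℕ) + 1 + j) (x (k + (n + 1 : ℕ) + 1 + j)) ∂μ := by
      rw [← integral_const_mul]
      refine setIntegral_congr_fun (measurableSet_word k (n + 1) _) fun x hx => ?_
      have hcast : ∀ j : ℕ, k + n + 1 + (j + 1 : ℕ) = k + (n + 1 : ℕ) + 1 + j := fun j => by
        push_cast
        ring
      simp only [Finset.prod_range_succ', hcast, Nat.cast_zero, add_zero, hlast b x hx]
      rw [mul_comm]
    have hprod : ∏ i ∈ Finset.range (n + 1),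
        Q (Function.update f (n + 1) b i) (Function.update f (n + 1) b (i + 1))
        = (∏ i ∈ Finset.range n, Q (f i) (f (i + 1))) * Q (f n) b := by
      rw [Finset.prod_range_succ, Function.update_self, Function.update_of_ne (by omega)]
      congr 1
      refine Finset.prod_congr rfl fun i hi => ?_
      have := Finset.mem_range.1 hi
      rw [Function.update_of_ne (by omega), Function.update_of_ne (by omega)]
    rw [hfactor, ih (n + 1), hprod, Function.update_self, Function.update_of_ne (by omega)]
    push_cast
    simp only [← add_assoc]
    ring

theorem integral_prod_eq_sum_transferProd {Q : A → A → ℝ} (hQ : ∀ a b, 0 ≤ Q a b)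
    {p : A → ℝ} (hp : ∀ a, 0 ≤ p a) {μ : Measure (ℤ → A)} [IsProbabilityMeasure μ]
    (hμ : ∀ (k : ℤ) (n : ℕ) (f : ℕ → A),
      μ {x | ∀ i : ℕ, i ≤ n → x (k + i) = f i}
        = ENNReal.ofReal (p (f 0) * ∏ i ∈ Finset.range n, Q (f i) (f (i + 1))))
    {h : ℤ → A → ℂ} (hh : ∀ i b, ‖h i b‖ ≤ 1) (k : ℤ) (m : ℕ) :
    ∫ x, ∏ j ∈ Finset.range m, h (k + j) (x (k + j)) ∂μ
      = ∑ a, (p a : ℂ) * transferProd Q h k m a := by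
  set W : A → Set (ℤ → A) := fun a => {x | ∀ i : ℕ, i ≤ 0 → x (k - 1 + i) = a} with hW
  have hmem : ∀ a x, x ∈ W a ↔ x (k - 1) = a := fun a x => by simp [hW]
  have hunion : Set.univ = ⋃ a, W a := by
    ext x
    simp [hmem]
  rw [← setIntegral_univ, hunion, integral_iUnion_fintype
    (fun a => measurableSet_word (k - 1) 0 fun _ => a)
    (fun a b hab => Set.disjoint_left.2 fun x ha hb => hab (((hmem a x).1 ha).symm.trans
      ((hmem b x).1 hb)))
    (fun a => (Integrable.of_bound (measurable_prod_coordinates h _ _).aestronglyMeasurable 1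
      (.of_forall fun x => norm_prod_coordinates_le_one hh _ _ x)).integrableOn)]
  refine Finset.sum_congr rfl fun a _ => ?_
  simpa using setIntegral_word_prod hQ hp hμ hh (k - 1) m 0 fun _ => a

end Discrete

section HarmonicMixing

open Filter Topology

variable {A : Type*} [AddCommGroup A]

/-- The filter of coefficient systems whose rank is finite and tends to infinity. -/
noncomputable def highRank (A : Type*) [AddCommGroup A] : Filter (ℤ → AddChar A ℂ) :=
  comap (fun χ => {i | χ i ≠ 1}.ncard) atTop

theorem eventually_highRank_lt (R : ℕ) :
    ∀ᶠ χ in highRank A, {i | χ i ≠ 1}.Finite ∧ R < {i | χ i ≠ 1}.ncard := by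
  filter_upwards [tendsto_comap.eventually (eventually_gt_atTop R)] with χ hχ
  exact ⟨Set.finite_of_ncard_pos (by omega), hχ⟩

theorem HarmonicallyMixing.of_tendsto [MeasurableSpace A] {μ : Measure (ℤ → A)}
    (h : Tendsto (fun χ => ∫ x, charEval χ x ∂μ) (highRank A) (𝓝 0)) : HarmonicallyMixing μ := by
  intro ε hε
  have hev := (Metric.tendsto_nhds.1 h) ε hε
  rw [highRank, eventually_comap, eventually_atTop] at hev
  obtain ⟨R, hR⟩ := hev
  refine ⟨R, fun χ _ hχ => ?_⟩
  simpa using hR _ hχ.le χ rfl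

theorem charEval_eq_prod {χ : ℤ → AddChar A ℂ} {s : Finset ℤ} (hs : {i | χ i ≠ 1} ⊆ s)
    (x : ℤ → A) : charEval χ x = ∏ i ∈ s, χ i (x i) := by
  refine finprod_eq_prod_of_mulSupport_subset _ fun i hi => hs fun h => hi ?_
  simp [h]

theorem exists_subset_image_range (s : Finset ℤ) :
    ∃ (k : ℤ) (m : ℕ), s ⊆ (Finset.range m).image fun j : ℕ => k + j := by
  refine ⟨-(s.sup Int.natAbs : ℕ), 2 * s.sup Int.natAbs + 1, fun i hi => ?_⟩
  have := Finset.le_sup (f := Int.natAbs) hi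
  exact Finset.mem_image.2 ⟨(i + (s.sup Int.natAbs : ℕ)).toNat,
    Finset.mem_range.2 (by omega), by omega⟩

variable [Fintype A]

theorem norm_charEval_le_one {χ : ℤ → AddChar A ℂ} (hχ : {i | χ i ≠ 1}.Finite) (x : ℤ → A) :
    ‖charEval χ x‖ ≤ 1 := by
  rw [charEval_eq_prod hχ.coe_toFinset.ge]
  exact norm_prod_coordinates_le_one (h := fun i => ⇑(χ i))
    (fun i b => (AddChar.norm_apply (χ i) b).le) hχ.toFinset id x

variable [MeasurableSpace A] [MeasurableSingletonClass A]

theorem measurable_charEval {χ : ℤ → AddChar A ℂ} (hχ : {i | χ i ≠ 1}.Finite) :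
    Measurable (charEval χ) := by
  rw [funext (charEval_eq_prod hχ.coe_toFinset.ge)]
  exact measurable_prod_coordinates (fun i => ⇑(χ i)) hχ.toFinset id

theorem integrable_charEval {χ : ℤ → AddChar A ℂ} (hχ : {i | χ i ≠ 1}.Finite)
    (μ : Measure (ℤ → A)) [IsFiniteMeasure μ] : Integrable (charEval χ) μ :=
  .of_bound (measurable_charEval hχ).aestronglyMeasurable 1 (.of_forall (norm_charEval_le_one hχ))

theorem integrable_smul_charEval {χ : ℤ → AddChar A ℂ} (hχ : {i | χ i ≠ 1}.Finite)
    {μ : Measure (ℤ → A)} {g : (ℤ → A) → ℝ} (hg : Integrable g μ) :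
    Integrable (fun x => g x • charEval χ x) μ :=
  hg.smul_bdd 1 (measurable_charEval hχ).aestronglyMeasurable
    (.of_forall (norm_charEval_le_one hχ))

section Markov

variable {Q : A → A → ℝ} {p : A → ℝ} {μ : Measure (ℤ → A)} [IsProbabilityMeasure μ]

open Classical in
theorem norm_setIntegral_charEval_pi_le {q : ℝ} (hq0 : 0 ≤ q) (hq : ∀ a b, q ≤ Q a b)
    (hq1 : Fintype.card A * q ≤ 1)
    (hQrow : ∀ a, ∑ b, Q a b = 1) (hp : ∀ a, 0 ≤ p a) (hp1 : ∑ a, p a = 1)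
    (hμ : ∀ (k : ℤ) (n : ℕ) (f : ℕ → A),
      μ {x | ∀ i : ℕ, i ≤ n → x (k + i) = f i}
        = ENNReal.ofReal (p (f 0) * ∏ i ∈ Finset.range n, Q (f i) (f (i + 1))))
    (s : Finset ℤ) (t : ℤ → Set A) {χ : ℤ → AddChar A ℂ} (hχ : {i | χ i ≠ 1}.Finite) :
    ‖∫ x in (s : Set ℤ).pi t, charEval χ x ∂μ‖
      ≤ (1 - (Fintype.card A * q) ^ 2) ^ (({i | χ i ≠ 1}.ncard - s.card) / 2) := by
  set h : ℤ → A → ℂ := fun i b => if i ∈ s ∧ b ∉ t i then 0 else χ i b with hh_def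
  have hh : ∀ i b, ‖h i b‖ ≤ 1 := fun i b => by
    simp only [hh_def]
    split_ifs
    · simp
    · exact (AddChar.norm_apply (χ i) b).le
  have hmean : ∀ i ∉ s, χ i ≠ 1 → ∑ b, h i b = 0 := fun i his hi => by
    simpa [hh_def, his] using AddChar.sum_eq_zero_of_ne_one hi
  obtain ⟨k, m, hkm⟩ := exists_subset_image_range (hχ.toFinset ∪ s)
  have hinj : Set.InjOn (fun j : ℕ => k + j) (Finset.range m : Set ℕ) := fun i _ j _ hij => by
    simpa using hij
  have hind : ∀ x, ((s : Set ℤ).pi t).indicator (charEval χ) x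
      = ∏ j ∈ Finset.range m, h (k + j) (x (k + j)) := fun x => by
    rw [← Finset.prod_image (f := fun i => h i (x i)) hinj]
    by_cases hx : x ∈ (s : Set ℤ).pi t
    · rw [Set.indicator_of_mem hx, charEval_eq_prod (s := (Finset.range m).image fun j : ℕ => k + j)
        fun i hi => hkm (Finset.mem_union_left _ (hχ.mem_toFinset.2 hi))]
      refine Finset.prod_congr rfl fun i _ => (if_neg ?_).symm
      rintro ⟨his, hi⟩
      exact hi (hx i his)
    · rw [Set.indicator_of_notMem hx]
      simp only [Set.mem_pi, not_forall] at hx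
      obtain ⟨i, his, hi⟩ := hx
      refine (Finset.prod_eq_zero (hkm (Finset.mem_union_right _ his)) ?_).symm
      exact if_pos ⟨his, hi⟩
  have hκ0 : 0 ≤ Fintype.card A * q := by positivity
  have hρ0 : 0 ≤ 1 - (Fintype.card A * q) ^ 2 := sub_nonneg.2 (pow_le_one₀ hκ0 hq1)
  have hρ1 : 1 - (Fintype.card A * q) ^ 2 ≤ 1 := by nlinarith
  have hcount : {i | χ i ≠ 1}.ncard - s.card
      ≤ ∑ j ∈ Finset.range m, if ∑ b, h (k + j) b = 0 then 1 else 0 := by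
    rw [← Finset.card_filter, Set.ncard_eq_toFinset_card _ hχ]
    refine (Finset.le_card_sdiff s _).trans (le_trans (Finset.card_le_card ?_)
      (Finset.card_image_le (f := fun j : ℕ => k + j)))
    intro i hi
    obtain ⟨hi, his⟩ := Finset.mem_sdiff.1 hi
    obtain ⟨j, hj, rfl⟩ := Finset.mem_image.1 (hkm (Finset.mem_union_left s hi))
    exact Finset.mem_image.2 ⟨j, Finset.mem_filter.2
      ⟨hj, hmean _ his (hχ.mem_toFinset.1 hi)⟩, rfl⟩
  have hpi : MeasurableSet ((s : Set ℤ).pi t) :=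
    MeasurableSet.pi s.countable_toSet fun i _ => .of_discrete
  rw [← integral_indicator hpi, funext hind,
    integral_prod_eq_sum_transferProd (fun a b => hq0.trans (hq a b)) hp hμ hh]
  calc ‖∑ a, (p a : ℂ) * transferProd Q h k m a‖
      ≤ ∑ a, p a * (1 - (Fintype.card A * q) ^ 2) ^ (({i | χ i ≠ 1}.ncard - s.card) / 2) := by
        refine norm_sum_le_of_le _ fun a _ => ?_
        rw [norm_mul, Complex.norm_real, Real.norm_of_nonneg (hp a)]
        refine mul_le_mul_of_nonneg_left ?_ (hp a)
        exact (norm_transferProd_le hq0 hq hq1 hQrow hh k m a).trans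
          (pow_le_pow_of_le_one hρ0 hρ1 (Nat.div_le_div_right hcount))
    _ = _ := by rw [← Finset.sum_mul, hp1, one_mul]

theorem tendsto_setIntegral_charEval_pi (hQpos : ∀ a b, 0 < Q a b)
    (hQrow : ∀ a, ∑ b, Q a b = 1) (hp : ∀ a, 0 ≤ p a) (hp1 : ∑ a, p a = 1)
    (hμ : ∀ (k : ℤ) (n : ℕ) (f : ℕ → A),
      μ {x | ∀ i : ℕ, i ≤ n → x (k + i) = f i}
        = ENNReal.ofReal (p (f 0) * ∏ i ∈ Finset.range n, Q (f i) (f (i + 1))))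
    (s : Finset ℤ) (t : ℤ → Set A) :
    Tendsto (fun χ => ∫ x in (s : Set ℤ).pi t, charEval χ x ∂μ) (highRank A) (𝓝 0) := by
  obtain ⟨⟨a₀, b₀⟩, hmin⟩ := Finite.exists_min fun ab : A × A => Q ab.1 ab.2
  set q := Q a₀ b₀
  have hq0 : 0 < q := hQpos _ _
  have hq : ∀ a b, q ≤ Q a b := fun a b => hmin (a, b)
  have hq1 : Fintype.card A * q ≤ 1 := by
    rw [← hQrow 0, ← nsmul_eq_mul]
    exact Finset.card_nsmul_le_sum _ _ _ fun b _ => hq 0 b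
  have hκ0 : 0 < Fintype.card A * q := mul_pos (Nat.cast_pos.2 Fintype.card_pos) hq0
  have hdiv : Tendsto (fun r : ℕ => (r - s.card) / 2) atTop atTop :=
    (Nat.tendsto_div_const_atTop two_ne_zero).comp (tendsto_sub_atTop_nat s.card)
  have hpow := (tendsto_pow_atTop_nhds_zero_of_lt_one
    (sub_nonneg.2 (pow_le_one₀ (n := 2) hκ0.le hq1)) (sub_lt_self 1 (pow_pos hκ0 2))).comp
      (hdiv.comp (tendsto_comap (f := fun χ : ℤ → AddChar A ℂ => {i | χ i ≠ 1}.ncard)))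
  refine squeeze_zero_norm' ?_ hpow
  filter_upwards [eventually_highRank_lt 0] with χ hχ
  exact norm_setIntegral_charEval_pi_le hq0.le hq hq1 hQrow hp hp1 hμ s t hχ.1

end Markov

variable {μ : Measure (ℤ → A)}

theorem tendsto_setIntegral_charEval [IsFiniteMeasure μ]
    (hpi : ∀ (s : Finset ℤ) (t : ℤ → Set A),
      Tendsto (fun χ => ∫ x in (s : Set ℤ).pi t, charEval χ x ∂μ) (highRank A) (𝓝 0))
    {E : Set (ℤ → A)} (hE : MeasurableSet E) :
    Tendsto (fun χ => ∫ x in E, charEval χ x ∂μ) (highRank A) (𝓝 0) := by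
  induction E, hE using MeasurableSpace.induction_on_inter generateFrom_squareCylinders.symm
    (isPiSystem_squareCylinders (fun _ => MeasurableSpace.isPiSystem_measurableSet) (by simp)) with
  | empty => simpa using tendsto_const_nhds
  | basic E hE =>
    obtain ⟨s, t, -, rfl⟩ := hE
    exact hpi s t
  | compl E hE ih =>
    have huniv : Tendsto (fun χ => ∫ x, charEval χ x ∂μ) (highRank A) (𝓝 0) := by
      simpa using hpi ∅ fun _ => Set.univ
    have hsub := huniv.sub ih
    rw [sub_zero] at hsub
    refine hsub.congr' ?_
    filter_upwards [eventually_highRank_lt 0] with χ hχ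
    rw [← integral_add_compl hE (integrable_charEval hχ.1 μ), add_sub_cancel_left]
  | iUnion E hdisj hE ih =>
    have hsum : Summable fun i => μ.real (E i) :=
      ENNReal.summable_toReal (by
        rw [← measure_iUnion hdisj hE]
        exact measure_ne_top _ _)
    have htsum := tendsto_tsum_of_dominated_convergence hsum ih (by
      filter_upwards [eventually_highRank_lt 0] with χ hχ i
      simpa using norm_setIntegral_le_of_norm_le_const (measure_lt_top μ (E i))
        fun x _ => norm_charEval_le_one hχ.1 x)
    rw [tsum_zero] at htsum
    refine htsum.congr' ?_
    filter_upwards [eventually_highRank_lt 0] with χ hχ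
    exact (integral_iUnion hE hdisj (integrable_charEval hχ.1 μ).integrableOn).symm

/-- The densities whose integrals against characters vanish at high rank form a closed subspace
of `L¹`, so it is enough to consider indicators. -/
theorem tendsto_integral_smul_charEval
    (hset : ∀ E : Set (ℤ → A), MeasurableSet E →
      Tendsto (fun χ => ∫ x in E, charEval χ x ∂μ) (highRank A) (𝓝 0))
    {g : (ℤ → A) → ℝ} (hg : Integrable g μ) :
    Tendsto (fun χ => ∫ x, g x • charEval χ x ∂μ) (highRank A) (𝓝 0) := by
  refine Integrable.induction (P := fun g : (ℤ → A) → ℝ =>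
    Tendsto (fun χ => ∫ x, g x • charEval χ x ∂μ) (highRank A) (𝓝 0)) ?_ ?_ ?_ ?_ hg
  · intro c E hE _
    have hmul := (hset E hE).const_smul c
    rw [smul_zero] at hmul
    refine hmul.congr fun χ => ?_
    rw [← integral_smul, ← integral_indicator hE]
    refine integral_congr_ae (.of_forall fun x => ?_)
    by_cases hx : x ∈ E <;> simp [hx]
  · intro f g _ hf hg ihf ihg
    have hadd := ihf.add ihg
    rw [add_zero] at hadd
    refine hadd.congr' ?_
    filter_upwards [eventually_highRank_lt 0] with χ hχ
    rw [← integral_add (integrable_smul_charEval hχ.1 hf) (integrable_smul_charEval hχ.1 hg)]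
    simp only [Pi.add_apply, add_smul]
  · refine isClosed_of_closure_subset fun f hf => Metric.tendsto_nhds.2 fun ε hε => ?_
    obtain ⟨g, hg, hfg⟩ := Metric.mem_closure_iff.1 hf (ε / 2) (half_pos hε)
    filter_upwards [Metric.tendsto_nhds.1 hg (ε / 2) (half_pos hε), eventually_highRank_lt 0]
      with χ hgχ hχ
    have hfi := integrable_smul_charEval hχ.1 (L1.integrable_coeFn f)
    have hgi := integrable_smul_charEval hχ.1 (L1.integrable_coeFn g)
    have hdist : ‖∫ x, f x • charEval χ x ∂μ - ∫ x, g x • charEval χ x ∂μ‖ ≤ dist f g := by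
      rw [← integral_sub hfi hgi, L1.dist_eq_integral_dist]
      refine norm_integral_le_of_norm_le
        ((L1.integrable_coeFn f).sub (L1.integrable_coeFn g)).norm (.of_forall fun x => ?_)
      rw [← sub_smul, norm_smul]
      exact mul_le_of_le_one_right (norm_nonneg _) (norm_charEval_le_one hχ.1 x)
    rw [dist_zero_right] at hgχ ⊢
    calc _ = ‖(∫ x, f x • charEval χ x ∂μ - ∫ x, g x • charEval χ x ∂μ)
          + ∫ x, g x • charEval χ x ∂μ‖ := by rw [sub_add_cancel]
      _ ≤ dist f g + ‖∫ x, g x • charEval χ x ∂μ‖ := (norm_add_le _ _).trans (by gcongr)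
      _ < ε := by linarith
  · intro f g hfg _ hf
    refine hf.congr fun χ => integral_congr_ae ?_
    filter_upwards [hfg] with x hx
    rw [hx]

end HarmonicMixing


/-- If `μ` is a stationary Markov measure on `A^ℤ` with strictly positive
transition matrix, then any probability measure `ν` absolutely continuous with
respect to `μ` is harmonically mixing. -/
theorem absolutelyContinuous_markov_harmonically_mixing (A : Type*) [AddCommGroup A]
    [Fintype A] [MeasurableSpace A]
    (Q : A → A → ℝ) (hQpos : ∀ a b, 0 < Q a b) (hQrow : ∀ a, ∑ b, Q a b = 1)
    (νv : A → ℝ) (hν0 : ∀ a, 0 ≤ νv a) (hν1 : ∑ a, νv a = 1)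
    (hstat : ∀ b, ∑ a, νv a * Q a b = νv b)
    (μ : Measure (ℤ → A)) [IsProbabilityMeasure μ]
    (hμ : ∀ (k : ℤ) (n : ℕ) (f : ℕ → A),
      μ {x | ∀ i : ℕ, i ≤ n → x (k + i) = f i}
        = ENNReal.ofReal (νv (f 0) * ∏ i ∈ Finset.range n, Q (f i) (f (i + 1))))
    (ν : Measure (ℤ → A)) [IsProbabilityMeasure ν] (hac : ν ≪ μ) :
    HarmonicallyMixing ν := by
  have hνpos : ∀ b, 0 < νv b := fun b => by
    obtain ⟨a, -, ha⟩ := Finset.exists_ne_zero_of_sum_ne_zero (hν1.trans_ne one_ne_zero)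
    rw [← hstat b]
    exact Finset.sum_pos' (fun a _ => mul_nonneg (hν0 a) (hQpos a b).le)
      ⟨a, Finset.mem_univ a, mul_pos ((hν0 a).lt_of_ne' ha) (hQpos a b)⟩
  have : MeasurableSingletonClass A :=
    measurableSingletonClass_of_sum_outer_measure μ 0 hνpos hν1 fun a => by
      simpa using hμ 0 0 fun _ => a
  refine HarmonicallyMixing.of_tendsto ?_
  simpa only [integral_rnDeriv_smul hac] using tendsto_integral_smul_charEval
    (fun E hE => tendsto_setIntegral_charEval
      (tendsto_setIntegral_charEval_pi hQpos hQrow hν0 hν1 hμ) hE)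
    (Measure.integrable_toReal_rnDeriv (μ := ν) (ν := μ))
end

section
/- Let p be prime and F a nontrivial linear cellular automaton on (ℤ/p)^{ℤ^D}, i.e., F is a polynomial in the shift maps with at least two nonzero coefficients. Then F is diffusive in density: for every nontrivial character χ of (ℤ/p)^{ℤ^D}, there is a subset J ⊆ ℕ of Cesàro density 1 along which rank(χ ∘ F^j) → ∞. -/
open Filter

/-- The character `γ^k` of `ℤ/p`. -/
noncomputable def zmodChar (p : ℕ) (k a : ZMod p) : ℂ :=
  Complex.exp (2 * Real.pi * Complex.I * ((k.val : ℂ) * (a.val : ℂ)) / (p : ℂ))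

/-- Evaluation of the character of `(ℤ/p)^{ℤ^D}` with (finitely supported)
coefficient system `χ`; its rank is `χ.support.card`. -/
noncomputable def prodChar {p D : ℕ} (χ : (Fin D → ℤ) →₀ ZMod p)
    (a : (Fin D → ℤ) → ZMod p) : ℂ :=
  ∏ q ∈ χ.support, zmodChar p (χ q) (a q)

/-- A set `J ⊆ ℕ` has Cesàro density one. -/
def HasDensityOne (J : Set ℕ) : Prop :=
  Tendsto (fun N => ((J ∩ Set.Iio N).ncard : ℝ) / N) atTop (nhds 1)

section Sections
variable {k : Type*} [Field k] {D : ℕ}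

/-- Every exponent of `g` lies in the cube `[-B, B]^D`. -/
def SupportedInCube (B : ℤ) (g : AddMonoidAlgebra k (Fin D → ℤ)) : Prop :=
  ∀ n, g.coeff n ≠ 0 → ∀ i, |n i| ≤ B

lemma SupportedInCube.mul {B C : ℤ} {g h : AddMonoidAlgebra k (Fin D → ℤ)}
    (hg : SupportedInCube B g) (hh : SupportedInCube C h) :
    SupportedInCube (B + C) (g * h) := by
  classical
  intro n hn i
  have hmem := AddMonoidAlgebra.support_coeff_mul_subset g h (Finsupp.mem_support_iff.2 hn)
  obtain ⟨a, ha, b, hb, rfl⟩ := Finset.mem_add.1 hmem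
  have h1 := hg a (Finsupp.mem_support_iff.1 ha) i
  have h2 := hh b (Finsupp.mem_support_iff.1 hb) i
  exact (abs_add_le _ _).trans (add_le_add h1 h2)

lemma SupportedInCube.mul_pow {B C : ℤ} {g h : AddMonoidAlgebra k (Fin D → ℤ)}
    (hg : SupportedInCube B g) (hh : SupportedInCube C h) (c : ℕ) :
    SupportedInCube (B + c * C) (g * h ^ c) := by
  induction c with
  | zero => simpa using hg
  | succ c ih =>
    rw [pow_succ, ← mul_assoc]
    convert ih.mul hh using 1
    push_cast
    ring

lemma exists_supportedInCube (g : AddMonoidAlgebra k (Fin D → ℤ)) :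
    ∃ d : ℕ, SupportedInCube d g := by
  refine ⟨g.coeff.support.sup fun n => Finset.univ.sup fun i => (n i).natAbs, fun n hn i => ?_⟩
  have h1 : (n i).natAbs ≤ Finset.univ.sup fun i => (n i).natAbs :=
    Finset.le_sup (f := fun i => (n i).natAbs) (Finset.mem_univ i)
  have h2 := Finset.le_sup (f := fun n : Fin D → ℤ => Finset.univ.sup fun i => (n i).natAbs)
    (Finsupp.mem_support_iff.2 hn)
  have h3 := h1.trans h2
  rw [Int.abs_eq_natAbs]
  exact_mod_cast h3

lemma SupportedInCube.mono {B C : ℤ} {g : AddMonoidAlgebra k (Fin D → ℤ)}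
    (hg : SupportedInCube B g) (h : B ≤ C) : SupportedInCube C g :=
  fun n hn i => (hg n hn i).trans h

/-- The number of monomials in `g`. -/
def termCount (g : AddMonoidAlgebra k (Fin D → ℤ)) : ℕ := g.coeff.support.card

lemma smul_add_injective {Q : ℕ} (hQ : 0 < Q) (r : Fin D → ℤ) :
    Function.Injective fun m : Fin D → ℤ => Q • m + r := by
  intro a b h
  have : Q • a = Q • b := add_right_cancel h
  exact nsmul_right_injective hQ.ne' this

/-- The part of `g` with exponents congruent to `r` modulo `Q`, rescaled by `1 / Q`. -/
noncomputable def residueSection {Q : ℕ} (hQ : 0 < Q) (r : Fin D → ℤ)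
    (g : AddMonoidAlgebra k (Fin D → ℤ)) : AddMonoidAlgebra k (Fin D → ℤ) :=
  g.comapDomain _ (smul_add_injective hQ r)

lemma coeff_residueSection {Q : ℕ} (hQ : 0 < Q) (r : Fin D → ℤ)
    (g : AddMonoidAlgebra k (Fin D → ℤ)) (m : Fin D → ℤ) :
    (residueSection hQ r g).coeff m = g.coeff (Q • m + r) := by
  simp [residueSection]

/-- The substitution `x ↦ x ^ Q` on Laurent polynomials. -/
noncomputable def expandHom (k : Type*) [Field k] (D Q : ℕ) :
    AddMonoidAlgebra k (Fin D → ℤ) →+* AddMonoidAlgebra k (Fin D → ℤ) :=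
  AddMonoidAlgebra.mapDomainRingHom k (nsmulAddMonoidHom Q)

lemma expandHom_single (Q : ℕ) (u : Fin D → ℤ) (a : k) :
    expandHom k D Q (AddMonoidAlgebra.single u a) = AddMonoidAlgebra.single (Q • u) a := by
  simp [expandHom]

lemma residueSection_mul_expandHom {Q : ℕ} (hQ : 0 < Q) (r : Fin D → ℤ)
    (g h : AddMonoidAlgebra k (Fin D → ℤ)) :
    residueSection hQ r (g * expandHom k D Q h) = residueSection hQ r g * h := by
  induction h using AddMonoidAlgebra.induction_linear with
  | zero => simp [residueSection]
  | add x y hx hy =>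
    rw [map_add, mul_add, mul_add, ← hx, ← hy]
    exact AddMonoidAlgebra.comapDomain_add _ _ _ _
  | single u a =>
    ext m
    rw [coeff_residueSection, expandHom_single, AddMonoidAlgebra.coeff_mul_single_apply,
      AddMonoidAlgebra.coeff_mul_single_apply, coeff_residueSection]
    congr 2
    rw [smul_add, smul_neg]
    abel

lemma termCount_residueSection_eq {Q : ℕ} (hQ : 0 < Q) (r : Fin D → ℤ)
    (g : AddMonoidAlgebra k (Fin D → ℤ)) :
    ((residueSection hQ r g).coeff.support.map ⟨_, smul_add_injective hQ r⟩).card =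
      termCount (residueSection hQ r g) :=
  Finset.card_map _

lemma map_support_residueSection_subset {Q : ℕ} (hQ : 0 < Q) (r : Fin D → ℤ)
    (g : AddMonoidAlgebra k (Fin D → ℤ)) :
    (residueSection hQ r g).coeff.support.map ⟨_, smul_add_injective hQ r⟩ ⊆
      g.coeff.support := by
  intro n hn
  obtain ⟨m, hm, rfl⟩ := Finset.mem_map.1 hn
  rw [Finsupp.mem_support_iff, coeff_residueSection] at hm
  exact Finsupp.mem_support_iff.2 hm

lemma termCount_residueSection_le {Q : ℕ} (hQ : 0 < Q) (r : Fin D → ℤ)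
    (g : AddMonoidAlgebra k (Fin D → ℤ)) :
    termCount (residueSection hQ r g) ≤ termCount g := by
  rw [← termCount_residueSection_eq]
  exact Finset.card_le_card (map_support_residueSection_subset hQ r g)

lemma termCount_residueSection_add_le {Q : ℕ} (hQ : 0 < Q) {r s : Fin D → ℤ}
    (hrs : ∀ m : Fin D → ℤ, s - r ≠ Q • m) (g : AddMonoidAlgebra k (Fin D → ℤ)) :
    termCount (residueSection hQ r g) + termCount (residueSection hQ s g) ≤ termCount g := by
  classical
  rw [← termCount_residueSection_eq, ← termCount_residueSection_eq, ← Finset.card_union_of_disjoint]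
  · exact Finset.card_le_card (Finset.union_subset (map_support_residueSection_subset hQ r g)
      (map_support_residueSection_subset hQ s g))
  · rw [Finset.disjoint_left]
    intro n hn hn'
    obtain ⟨a, -, rfl⟩ := Finset.mem_map.1 hn
    obtain ⟨b, -, hb⟩ := Finset.mem_map.1 hn'
    refine hrs (a - b) ?_
    simp only [Function.Embedding.coeFn_mk] at hb
    rw [smul_sub, sub_eq_sub_iff_add_eq_add, add_comm s, hb]

lemma exists_two_coeff_mul_ne_zero {g h : AddMonoidAlgebra k (Fin D → ℤ)} (hg : g ≠ 0)
    (hh : 2 ≤ termCount h) :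
    ∃ m n, m ≠ n ∧ (g * h).coeff m ≠ 0 ∧ (g * h).coeff n ≠ 0 := by
  have hg' : 0 < g.coeff.support.card :=
    Finset.card_pos.2 (Finsupp.support_nonempty_iff.2 (by simpa using hg))
  obtain ⟨a, ha, b, hb, hab, hua, hub⟩ := TwoUniqueSums.uniqueAdd_of_one_lt_card
    (A := g.coeff.support) (B := h.coeff.support) (by
      rw [termCount] at hh
      nlinarith)
  rw [Finset.mem_product, Finsupp.mem_support_iff, Finsupp.mem_support_iff] at ha hb
  refine ⟨a.1 + a.2, b.1 + b.2, fun h => hab ?_, ?_, ?_⟩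
  · have := hub (Finsupp.mem_support_iff.2 ha.1) (Finsupp.mem_support_iff.2 ha.2) h
    exact Prod.ext this.1 this.2
  · rw [AddMonoidAlgebra.coeff_mul_add_of_uniqueAdd hua]
    exact mul_ne_zero ha.1 ha.2
  · rw [AddMonoidAlgebra.coeff_mul_add_of_uniqueAdd hub]
    exact mul_ne_zero hb.1 hb.2

end Sections

lemma pow_eq_expandHom {p D : ℕ} [Fact p.Prime] (f : AddMonoidAlgebra (ZMod p) (Fin D → ℤ))
    (s : ℕ) : f ^ p ^ s = expandHom (ZMod p) D (p ^ s) f := by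
  have : CharP (AddMonoidAlgebra (ZMod p) (Fin D → ℤ)) p :=
    charP_of_injective_algebraMap (algebraMap (ZMod p) _).injective p
  induction f using AddMonoidAlgebra.induction_linear with
  | zero => simp [(Fact.out : p.Prime).ne_zero]
  | add x y hx hy => rw [add_pow_char_pow, hx, hy, map_add]
  | single u a => rw [AddMonoidAlgebra.single_pow, expandHom_single, ZMod.pow_card_pow]

section Digits

/-- The number of digits equal to `1` in the base `Q` expansion of `j`. -/
def onesCount (Q j : ℕ) : ℕ := (Nat.digits Q j).count 1

lemma onesCount_add_mul {Q : ℕ} (hQ : 1 < Q) {c : ℕ} (hc : c < Q) (j : ℕ) :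
    onesCount Q (c + Q * j) = (if c = 1 then 1 else 0) + onesCount Q j := by
  by_cases h : c ≠ 0 ∨ j ≠ 0
  · rw [onesCount, Nat.digits_add Q hQ c j hc h, List.count_cons, onesCount, add_comm]
    simp
  · push Not at h
    simp [h.1, h.2, onesCount]

end Digits

lemma two_pow_onesCount_le_termCount {p D : ℕ} [Fact p.Prime] {d s : ℕ} (hd : 4 * d < p ^ s)
    (hQ : 1 < p ^ s)
    {f : AddMonoidAlgebra (ZMod p) (Fin D → ℤ)} (hf : 2 ≤ termCount f)
    (hfd : SupportedInCube d f) (j : ℕ) :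
    ∀ g : AddMonoidAlgebra (ZMod p) (Fin D → ℤ), g ≠ 0 → SupportedInCube d g →
      2 ^ onesCount (p ^ s) j ≤ termCount (g * f ^ j) := by
  have hf0 : f ≠ 0 := by
    rintro rfl
    simp [termCount] at hf
  set Q := p ^ s with hQdef
  have hQ0 : 0 < Q := by omega
  induction j using Nat.strong_induction_on with
  | _ j ih =>
  intro g hg hgd
  rcases Nat.eq_zero_or_pos j with rfl | hj
  · simp only [onesCount, Nat.digits_zero, List.count_nil, pow_zero, mul_one]
    exact Finset.card_pos.2 (Finsupp.support_nonempty_iff.2 (by simpa using hg))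
  have hlt : j / Q < j := Nat.div_lt_self hj hQ
  have hmod : j % Q < Q := Nat.mod_lt _ hQ0
  have hcount : onesCount Q j = (if j % Q = 1 then 1 else 0) + onesCount Q (j / Q) := by
    rw [← onesCount_add_mul hQ hmod, Nat.mod_add_div]
  have hpow : g * f ^ j = g * f ^ (j % Q) * expandHom (ZMod p) D Q (f ^ (j / Q)) := by
    rw [map_pow, hQdef, ← pow_eq_expandHom, ← hQdef, ← pow_mul, mul_assoc, ← pow_add,
      Nat.mod_add_div]
  rw [hcount, hpow]
  have key : ∀ r, residueSection hQ0 r (g * f ^ (j % Q)) ≠ 0 →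
      SupportedInCube d (residueSection hQ0 r (g * f ^ (j % Q))) →
      2 ^ onesCount Q (j / Q) ≤ termCount (residueSection hQ0 r
        (g * f ^ (j % Q) * expandHom (ZMod p) D Q (f ^ (j / Q)))) := by
    intro r h1 h2
    rw [residueSection_mul_expandHom]
    exact ih _ hlt _ h1 h2
  split_ifs with h1
  · rw [h1, pow_one] at key ⊢
    obtain ⟨m, n, hmn, hm, hn⟩ := exists_two_coeff_mul_ne_zero hg hf
    have hcube := hgd.mul hfd
    have hsec : ∀ r, (g * f).coeff r ≠ 0 → 2 ^ onesCount Q (j / Q) ≤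
        termCount (residueSection hQ0 r (g * f * expandHom (ZMod p) D Q (f ^ (j / Q)))) := by
      intro r hr
      refine key r (fun h0 => hr ?_) fun x hx i => ?_
      · have := coeff_residueSection hQ0 r (g * f) 0
        rw [h0] at this
        simpa using this.symm
      · rw [coeff_residueSection] at hx
        have ha := abs_le.1 (hcube _ hx i)
        have hb := abs_le.1 (hcube _ hr i)
        simp only [Pi.add_apply, Pi.smul_apply, Int.nsmul_eq_mul] at ha
        have hx0 : x i = 0 := by
          have hdz : (4 * d : ℤ) < Q := by exact_mod_cast hd
          by_contra hne
          rcases lt_or_gt_of_ne hne with h | h <;> nlinarith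
        simp [hx0]
    refine le_trans ?_ (termCount_residueSection_add_le hQ0 (r := m) (s := n) (fun x hx => hmn ?_) _)
    · rw [pow_add, pow_one, two_mul]
      exact add_le_add (hsec m hm) (hsec n hn)
    · funext i
      have ha := abs_le.1 (hcube _ hm i)
      have hb := abs_le.1 (hcube _ hn i)
      have hxi := congrFun hx i
      simp only [Pi.sub_apply, Pi.smul_apply, Int.nsmul_eq_mul] at hxi
      have hx0 : x i = 0 := by
        have hdz : (4 * d : ℤ) < Q := by exact_mod_cast hd
        by_contra hne
        rcases lt_or_gt_of_ne hne with h | h <;> nlinarith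
      rw [hx0] at hxi
      linarith
  · rw [zero_add]
    have hne : g * f ^ (j % Q) ≠ 0 := mul_ne_zero hg (pow_ne_zero _ hf0)
    obtain ⟨n, hn⟩ := Finsupp.support_nonempty_iff.2
      (show (g * f ^ (j % Q)).coeff ≠ 0 by simpa using hne)
    rw [Finsupp.mem_support_iff] at hn
    have hcube := hgd.mul_pow hfd (j % Q)
    refine (key (fun i => n i % Q) (fun h0 => hn ?_) fun x hx i => ?_).trans
      (termCount_residueSection_le hQ0 _ _)
    · have := coeff_residueSection hQ0 (fun i => n i % Q) (g * f ^ (j % Q)) (fun i => n i / Q)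
      rw [h0] at this
      rw [AddMonoidAlgebra.coeff_zero, Finsupp.zero_apply] at this
      convert this.symm using 2
      funext i
      simp [Int.mul_ediv_add_emod]
    · rw [coeff_residueSection] at hx
      have ha := abs_le.1 (hcube _ hx i)
      simp only [Pi.add_apply, Pi.smul_apply, Int.nsmul_eq_mul] at ha
      have hQz : (0 : ℤ) < Q := by exact_mod_cast hQ0
      have hr0 := Int.emod_nonneg (n i) hQz.ne'
      have hr1 := Int.emod_lt_of_pos (n i) hQz
      have hcQ : ((j % Q : ℕ) : ℤ) + 1 ≤ Q := by exact_mod_cast hmod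
      have hmul : ((j % Q : ℕ) : ℤ) * d ≤ (Q - 1) * d := by
        apply mul_le_mul_of_nonneg_right <;> omega
      rw [abs_le]
      constructor
      · by_contra! h
        nlinarith
      · by_contra! h
        nlinarith

section Duality
variable {p D : ℕ}

/-- The duality pairing of a Laurent polynomial with a configuration. -/
noncomputable def pairing (g : AddMonoidAlgebra (ZMod p) (Fin D → ℤ))
    (a : (Fin D → ℤ) → ZMod p) : ZMod p :=
  g.coeff.sum fun q c => c * a q

lemma pairing_add (g h : AddMonoidAlgebra (ZMod p) (Fin D → ℤ)) (a : (Fin D → ℤ) → ZMod p) :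
    pairing (g + h) a = pairing g a + pairing h a :=
  Finsupp.sum_add_index' (by simp) (by intros; ring)

lemma pairing_single (u : Fin D → ℤ) (c : ZMod p) (a : (Fin D → ℤ) → ZMod p) :
    pairing (AddMonoidAlgebra.single u c) a = c * a u :=
  Finsupp.sum_single_index (by simp)

lemma pairing_single_one (g : AddMonoidAlgebra (ZMod p) (Fin D → ℤ)) (q : Fin D → ℤ) :
    pairing g (Pi.single q 1) = g.coeff q := by
  induction g using AddMonoidAlgebra.induction_linear with
  | zero => simp [pairing]
  | add x y hx hy => rw [pairing_add, hx, hy]; rfl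
  | single u c =>
    rw [pairing_single, AddMonoidAlgebra.coeff_single, Pi.single_apply, Finsupp.single_apply]
    simp

lemma pairing_single_mul (q : Fin D → ℤ) (c : ZMod p)
    (f : AddMonoidAlgebra (ZMod p) (Fin D → ℤ)) (a : (Fin D → ℤ) → ZMod p) :
    pairing (AddMonoidAlgebra.single q c * f) a =
      c * pairing f fun u => a (q + u) := by
  induction f using AddMonoidAlgebra.induction_linear with
  | zero => simp [pairing]
  | add x y hx hy => rw [mul_add, pairing_add, hx, hy, pairing_add, mul_add]
  | single u b => rw [AddMonoidAlgebra.single_mul_single, pairing_single, pairing_single, mul_assoc]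

lemma pairing_mul (g f : AddMonoidAlgebra (ZMod p) (Fin D → ℤ)) (a : (Fin D → ℤ) → ZMod p) :
    pairing (g * f) a = pairing g fun n => pairing f fun u => a (n + u) := by
  induction g using AddMonoidAlgebra.induction_linear with
  | zero => simp [pairing]
  | add x y hx hy => rw [add_mul, pairing_add, hx, hy, pairing_add]
  | single q c => rw [pairing_single_mul, pairing_single]

lemma pairing_iterate (f : AddMonoidAlgebra (ZMod p) (Fin D → ℤ))
    (F : ((Fin D → ℤ) → ZMod p) → ((Fin D → ℤ) → ZMod p))
    (hF : ∀ a n, F a n = pairing f fun u => a (n + u))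
    (g : AddMonoidAlgebra (ZMod p) (Fin D → ℤ)) (j : ℕ) (a : (Fin D → ℤ) → ZMod p) :
    pairing g (F^[j] a) = pairing (g * f ^ j) a := by
  induction j generalizing a with
  | zero => simp
  | succ j ih =>
    rw [Function.iterate_succ_apply, ih, pow_succ, ← mul_assoc, pairing_mul (g * f ^ j)]
    congr 1
    funext n
    exact hF a n

lemma zmodChar_eq_stdAddChar [NeZero p] (k a : ZMod p) :
    zmodChar p k a = ZMod.stdAddChar (k * a) := by
  have h : k * a = (((k.val * a.val : ℕ) : ℤ) : ZMod p) := by simp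
  rw [h, ZMod.stdAddChar_coe, zmodChar]
  push_cast
  rfl

lemma prodChar_eq_stdAddChar [NeZero p] (χ : (Fin D → ℤ) →₀ ZMod p)
    (a : (Fin D → ℤ) → ZMod p) :
    prodChar χ a = ZMod.stdAddChar (pairing (.ofCoeff χ) a) := by
  classical
  have hsum : ∀ s : Finset (Fin D → ℤ),
      ∏ q ∈ s, zmodChar p (χ q) (a q) = ZMod.stdAddChar (∑ q ∈ s, χ q * a q) := by
    intro s
    induction s using Finset.induction_on with
    | empty => simp
    | insert q s hq ih =>
      rw [Finset.prod_insert hq, Finset.sum_insert hq, ih, AddChar.map_add_eq_mul,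
        zmodChar_eq_stdAddChar]
  exact hsum χ.support

lemma eq_coeff_mul_pow_of_prodChar_eq [NeZero p] (f : AddMonoidAlgebra (ZMod p) (Fin D → ℤ))
    (F : ((Fin D → ℤ) → ZMod p) → ((Fin D → ℤ) → ZMod p))
    (hF : ∀ a n, F a n = pairing f fun u => a (n + u)) (χ ψ : (Fin D → ℤ) →₀ ZMod p) (j : ℕ)
    (h : ∀ a, prodChar ψ a = prodChar χ (F^[j] a)) :
    ψ = (AddMonoidAlgebra.ofCoeff χ * f ^ j).coeff := by
  ext q
  have := h (Pi.single q 1)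
  rw [prodChar_eq_stdAddChar, prodChar_eq_stdAddChar, pairing_iterate f F hF] at this
  simpa only [pairing_single_one] using ZMod.injective_stdAddChar this

end Duality

section Density

lemma sum_range_mul_inv_two_pow_onesCount {Q : ℕ} (hQ : 1 < Q) (M : ℕ) :
    ∑ j ∈ Finset.range (Q * M), (1 / 2 : ℝ) ^ onesCount Q j =
      (Q - 1 / 2) * ∑ j ∈ Finset.range M, (1 / 2 : ℝ) ^ onesCount Q j := by
  induction M with
  | zero => simp
  | succ M ih =>
    rw [mul_add_one, Finset.sum_range_add, ih, Finset.sum_range_succ, mul_add]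
    congr 1
    have hterm : ∀ c ∈ Finset.range Q, (1 / 2 : ℝ) ^ onesCount Q (Q * M + c) =
        (1 - if c = 1 then 1 / 2 else 0) * (1 / 2 : ℝ) ^ onesCount Q M := by
      intro c hc
      rw [add_comm, onesCount_add_mul hQ (Finset.mem_range.1 hc), pow_add]
      congr 1
      split_ifs <;> norm_num
    rw [Finset.sum_congr rfl hterm, ← Finset.sum_mul, Finset.sum_sub_distrib,
      Finset.sum_ite_eq']
    simp [hQ]

lemma sum_range_pow_inv_two_pow_onesCount {Q : ℕ} (hQ : 1 < Q) (n : ℕ) :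
    ∑ j ∈ Finset.range (Q ^ n), (1 / 2 : ℝ) ^ onesCount Q j = (Q - 1 / 2 : ℝ) ^ n := by
  induction n with
  | zero => simp [onesCount]
  | succ n ih => rw [pow_succ', sum_range_mul_inv_two_pow_onesCount hQ, ih, pow_succ']

lemma tendsto_natLog_atTop {Q : ℕ} (hQ : 1 < Q) : Tendsto (Nat.log Q) atTop atTop :=
  tendsto_atTop_atTop.2 fun b => ⟨Q ^ b, fun _ hn => Nat.le_log_of_pow_le hQ hn⟩

lemma hasDensityOne_of_tendsto_compl {J : Set ℕ}
    (h : Tendsto (fun N : ℕ => ((Jᶜ ∩ Set.Iio N).ncard : ℝ) / N) atTop (nhds 0)) :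
    HasDensityOne J := by
  have h1 : Tendsto (fun N : ℕ => 1 - ((Jᶜ ∩ Set.Iio N).ncard : ℝ) / N) atTop (nhds 1) := by
    simpa using h.const_sub 1
  refine h1.congr' ?_
  filter_upwards [eventually_gt_atTop 0] with N hN
  have hsplit : (J ∩ Set.Iio N).ncard + (Jᶜ ∩ Set.Iio N).ncard = N := by
    rw [← Set.ncard_union_eq, ← Set.union_inter_distrib_right, Set.union_compl_self,
      Set.univ_inter, Set.ncard_eq_toFinset_card']
    · simp
    · exact disjoint_compl_right.mono Set.inter_subset_left Set.inter_subset_left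
  have hcast : ((J ∩ Set.Iio N).ncard : ℝ) + (Jᶜ ∩ Set.Iio N).ncard = N := by
    exact_mod_cast hsplit
  have hN' : (N : ℝ) ≠ 0 := by positivity
  rw [eq_div_iff hN', sub_mul, div_mul_cancel₀ _ hN']
  linarith

lemma hasDensityOne_onesCount {Q : ℕ} (hQ : 1 < Q) {μ : ℝ} (hμ0 : 0 < μ) (hμ1 : μ < 1)
    (hμ : μ ^ 2 = 1 - 1 / (2 * Q)) :
    HasDensityOne {j | (1 / 2 : ℝ) ^ onesCount Q j ≤ μ ^ Nat.log Q j} := by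
  have hQ0 : (0 : ℝ) < Q := by positivity
  have hlim : Tendsto (fun N : ℕ => Q * μ ^ Nat.log Q N) atTop (nhds 0) := by
    simpa using ((tendsto_pow_atTop_nhds_zero_of_lt_one hμ0.le hμ1).comp
      (tendsto_natLog_atTop hQ)).const_mul (Q : ℝ)
  refine hasDensityOne_of_tendsto_compl (squeeze_zero' (.of_forall fun N => by positivity) ?_ hlim)
  filter_upwards [eventually_gt_atTop 0] with N hN
  set L := Nat.log Q N with hL
  have hNL : (Q : ℝ) ^ L ≤ N := by exact_mod_cast Nat.pow_log_le_self Q hN.ne'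
  have hNL' : N ≤ Q ^ (L + 1) := (Nat.lt_pow_succ_log_self hQ N).le
  have hcard : (({j | (1 / 2 : ℝ) ^ onesCount Q j ≤ μ ^ Nat.log Q j}ᶜ ∩ Set.Iio N).ncard : ℝ) *
      μ ^ L ≤ ∑ j ∈ Finset.range (Q ^ (L + 1)), (1 / 2 : ℝ) ^ onesCount Q j := by
    classical
    have heq : ({j | (1 / 2 : ℝ) ^ onesCount Q j ≤ μ ^ Nat.log Q j}ᶜ ∩ Set.Iio N) =
        ((Finset.range N).filter fun j => μ ^ Nat.log Q j < (1 / 2 : ℝ) ^ onesCount Q j) := by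
      ext j
      simp [and_comm]
    rw [heq, Set.ncard_coe_finset, ← nsmul_eq_mul, ← Finset.sum_const]
    refine (Finset.sum_le_sum fun j hj => ?_).trans (Finset.sum_le_sum_of_subset_of_nonneg
      ((Finset.filter_subset _ _).trans (Finset.range_subset_range.2 hNL'))
      fun j _ _ => by positivity)
    rw [Finset.mem_filter, Finset.mem_range] at hj
    exact (pow_le_pow_of_le_one hμ0.le hμ1.le (Nat.log_mono_right hj.1.le)).trans hj.2.le
  have hbase : (Q - 1 / 2 : ℝ) = Q * μ ^ 2 := by
    rw [hμ]
    field_simp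
  rw [sum_range_pow_inv_two_pow_onesCount hQ, hbase] at hcard
  have hμL : 0 < μ ^ L := by positivity
  rw [div_le_iff₀ (by positivity)]
  refine le_of_mul_le_mul_right (hcard.trans ?_) hμL
  calc ((Q : ℝ) * μ ^ 2) ^ (L + 1) = Q * μ ^ L * Q ^ L * μ ^ L * μ ^ 2 := by ring
    _ ≤ Q * μ ^ L * Q ^ L * μ ^ L * 1 := by
        gcongr
        exact pow_le_one₀ hμ0.le hμ1.le
    _ ≤ Q * μ ^ L * N * μ ^ L := by
        rw [mul_one]
        gcongr

/-- The integers with many base `Q` digits equal to `1` have density one. -/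
lemma exists_hasDensityOne_tendsto_two_pow_onesCount {Q : ℕ} (hQ : 1 < Q) :
    ∃ J : Set ℕ, HasDensityOne J ∧
      Tendsto (fun j => 2 ^ onesCount Q j) (atTop ⊓ principal J) atTop := by
  have hQ1 : (1 : ℝ) < Q := by exact_mod_cast hQ
  have hpos : 0 < 1 - 1 / (2 * Q : ℝ) := by
    rw [sub_pos, div_lt_one (by positivity)]
    linarith
  have hlt : 1 - 1 / (2 * Q : ℝ) < 1 := by
    rw [sub_lt_self_iff]
    positivity
  have hμ0 := Real.sqrt_pos.2 hpos
  have hμ1 : √(1 - 1 / (2 * Q : ℝ)) < 1 := by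
    rw [Real.sqrt_lt' one_pos]
    simpa using hlt
  refine ⟨_, hasDensityOne_onesCount hQ hμ0 hμ1 (Real.sq_sqrt hpos.le), ?_⟩
  rw [← tendsto_natCast_atTop_iff (R := ℝ)]
  have hlim : Tendsto (fun j => (√(1 - 1 / (2 * Q : ℝ)) ^ Nat.log Q j)⁻¹) atTop atTop := by
    simp_rw [← inv_pow]
    exact (tendsto_pow_atTop_atTop_of_one_lt ((one_lt_inv₀ hμ0).2 hμ1)).comp
      (tendsto_natLog_atTop hQ)
  refine tendsto_atTop_mono' _ ?_ (hlim.mono_left inf_le_left)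
  refine eventually_inf_principal.2 (.of_forall fun j hj => ?_)
  rw [Set.mem_ofPred_eq, one_div, inv_pow] at hj
  push_cast
  exact inv_le_of_inv_le₀ (by positivity) hj

end Density

/-- Every nontrivial linear cellular automaton `F = ∑_{u} f_u σ^u` (at least two
nonzero coefficients) on `(ℤ/p)^{ℤ^D}`, `p` prime, is diffusive in density:
for every nontrivial character `χ` there is a set `J ⊆ ℕ` of Cesàro density 1
such that the rank of `χ ∘ F^j` (expressed by any coefficient system `ψ j`
representing it) tends to infinity along `J`. -/
theorem nontrivial_lca_diffusive_in_density (p D : ℕ) (hp : p.Prime)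
    (f : (Fin D → ℤ) →₀ ZMod p) (hf : 2 ≤ f.support.card)
    (F : ((Fin D → ℤ) → ZMod p) → ((Fin D → ℤ) → ZMod p))
    (hF : ∀ (a : (Fin D → ℤ) → ZMod p) (n : Fin D → ℤ),
      F a n = ∑ u ∈ f.support, f u * a (n + u)) :
    ∀ χ : (Fin D → ℤ) →₀ ZMod p, χ ≠ 0 →
      ∃ J : Set ℕ, HasDensityOne J ∧
        ∀ ψ : ℕ → ((Fin D → ℤ) →₀ ZMod p),
          (∀ (j : ℕ) (a : (Fin D → ℤ) → ZMod p), prodChar (ψ j) a = prodChar χ (F^[j] a)) →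
          Tendsto (fun j => (ψ j).support.card) (atTop ⊓ Filter.principal J) atTop := by
  intro χ hχ
  have : Fact p.Prime := ⟨hp⟩
  have : NeZero p := ⟨hp.ne_zero⟩
  have hF' : ∀ a n, F a n =
      pairing (AddMonoidAlgebra.ofCoeff f) fun u => a (n + u) := fun a n => hF a n
  obtain ⟨d₁, hd₁⟩ := exists_supportedInCube (AddMonoidAlgebra.ofCoeff f)
  obtain ⟨d₂, hd₂⟩ := exists_supportedInCube (AddMonoidAlgebra.ofCoeff χ)
  set d := max d₁ d₂
  have hfd := hd₁.mono (show (d₁ : ℤ) ≤ (d : ℕ) by exact_mod_cast le_max_left d₁ d₂)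
  have hχd := hd₂.mono (show (d₂ : ℤ) ≤ (d : ℕ) by exact_mod_cast le_max_right d₁ d₂)
  have hd : 4 * d + 1 < p ^ (4 * d + 1) := Nat.lt_pow_self hp.one_lt
  have hQ : 1 < p ^ (4 * d + 1) := by omega
  obtain ⟨J, hJ, hlim⟩ := exists_hasDensityOne_tendsto_two_pow_onesCount hQ
  refine ⟨J, hJ, fun ψ hψ => tendsto_atTop_mono (fun j => ?_) hlim⟩
  rw [eq_coeff_mul_pow_of_prodChar_eq _ F hF' χ (ψ j) j (hψ j)]
  exact two_pow_onesCount_le_termCount (by omega) hQ hf hfd j _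
    (by simpa using hχ) hχd
end
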